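/- arXiv:1506.08773 — 4 statements merged into one kernel-verified Lean document; each statement's English description precedes it below -/
import Mathlib

section
/- Let (M,d) be a metric space with a fixed reference point o. For a ∈ (0,1) and κ > 0 set p_a(x) = (1+d(o,x))^a and ϖ(x,τ) = e^{κτ} e^{(1+τ)(1+d(o,x))}. Then for every a ∈ (0,1) and ε ∈ [0,1) there exists a constant C, depending only on a and ε, such that for every κ > 0, every T > 0, every x ∈ M and all times 0 ≤ σ < τ ≤ T one has p_a(x)·ϖ(x,σ) ≤ C κ^{−ε} (τ−σ)^{−(a+ε)} ϖ(x,τ). -/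
theorem rpow_le_exp_aux (y a : ℝ) (hy : 0 ≤ y) (h0 : 0 ≤ a) (h1 : a ≤ 1) :
    y ^ a ≤ Real.exp y := by
  calc y ^ a ≤ (1 + y) ^ a := Real.rpow_le_rpow hy (by linarith) h0
    _ ≤ (1 + y) ^ (1 : ℝ) := Real.rpow_le_rpow_of_exponent_le (by linarith) h1
    _ = y + 1 := by rw [Real.rpow_one]; ring
    _ ≤ Real.exp y := Real.add_one_le_exp y

/-- The key property of the special weights `p_a(x) = (1+d(o,x))^a` and
`ϖ(x,τ) = e^{κτ} e^{(1+τ)(1+d(o,x))}`: for `a ∈ (0,1)` and `ε ∈ [0,1)` there is a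
constant `C`, depending only on `a` and `ε`, with
`p_a(x) ϖ(x,σ) ≤ C κ^{-ε} (τ-σ)^{-(a+ε)} ϖ(x,τ)` for all `κ > 0`, `T > 0`,
`x ∈ M` and `0 ≤ σ < τ ≤ T`. -/
theorem weight_inequality :
    ∀ a ε : ℝ, 0 < a → a < 1 → 0 ≤ ε → ε < 1 →
    ∃ C : ℝ, 0 < C ∧
      ∀ (M : Type) [MetricSpace M], ∀ (o : M) (κ T : ℝ), 0 < κ → 0 < T →
        ∀ (x : M) (σ τ : ℝ), 0 ≤ σ → σ < τ → τ ≤ T →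
          (1 + dist o x) ^ a *
              (Real.exp (κ * σ) * Real.exp ((1 + σ) * (1 + dist o x)))
            ≤ C * κ ^ (-ε) * (τ - σ) ^ (-(a + ε)) *
              (Real.exp (κ * τ) * Real.exp ((1 + τ) * (1 + dist o x))) := by
  intro a ε ha ha1 hε hε1
  refine ⟨1, one_pos, ?_⟩
  intro M _ o κ T hκ _ x σ τ _ hστ _
  have hr : 0 < 1 + dist o x := by positivity
  generalize 1 + dist o x = r at hr ⊢
  obtain ⟨s, rfl⟩ : ∃ s, τ = σ + s := ⟨τ - σ, by ring⟩
  have hs : 0 < s := by linarith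
  have e1 : σ + s - σ = s := by ring
  rw [e1]
  have A := rpow_le_exp_aux (r * s) a (by positivity) ha.le ha1.le
  have B := rpow_le_exp_aux (κ * s) ε (by positivity) hε hε1.le
  have AB := mul_le_mul A B (by positivity) (by positivity)
  have key : r ^ a = κ ^ (-ε) * s ^ (-(a + ε)) * ((r * s) ^ a * (κ * s) ^ ε) := by
    rw [Real.mul_rpow hr.le hs.le, Real.mul_rpow hκ.le hs.le, Real.rpow_neg hκ.le,
      Real.rpow_neg hs.le, Real.rpow_add hs]
    have := (Real.rpow_pos_of_pos hκ ε).ne'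
    have := (Real.rpow_pos_of_pos hs ε).ne'
    have := (Real.rpow_pos_of_pos hs a).ne'
    field_simp
  have e2 : Real.exp (κ * (σ + s)) * Real.exp ((1 + (σ + s)) * r) =
      (Real.exp (r * s) * Real.exp (κ * s)) *
        (Real.exp (κ * σ) * Real.exp ((1 + σ) * r)) := by
    simp only [← Real.exp_add]
    congr 1
    ring
  rw [e2, key, one_mul, mul_assoc (κ ^ (-ε) * s ^ (-(a + ε)))]
  exact mul_le_mul_of_nonneg_left (mul_le_mul_of_nonneg_right AB (by positivity)) (by positivity)
end

section
/- Let k ≥ 1 be an integer. Let m₁ : ℝ → ℝ be continuous, supported in [1/2,2], with vanishing moments ∫ x^i m₁(x) dx = 0 for all integers 0 ≤ i ≤ k−1, and let m₂ : ℝ → ℝ be k times continuously differentiable with support in [1/2,2]. For u > 0 write m_u(x) = u^{−1} m(x/u). Then: (i) the k-th iterated antiderivative F_k of m₁ (defined by integrating from −∞, k times) is itself supported in [1/2,2]; (ii) for all 0 < s ≤ t, the convolution m₁_s ∗ m₂_t is supported in [(s+t)/2, 2(s+t)] and satisfies the uniform bound ‖m₁_s ∗ m₂_t‖_∞ ≤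 (s/t)^k t^{−1} ‖F_k‖_{L¹} ‖m₂^{(k)}‖_∞. -/
open MeasureTheory

/-- The `k`-th iterated antiderivative (integrating from `−∞`) of a function on `ℝ`. -/
noncomputable def iterAnti (m : ℝ → ℝ) : ℕ → ℝ → ℝ
  | 0 => m
  | k + 1 => fun x => ∫ y in Set.Iic x, iterAnti m k y

lemma hcs_of_supp {f : ℝ → ℝ} (h : Function.support f ⊆ Set.Icc (1 / 2 : ℝ) 2) :
    HasCompactSupport f :=
  HasCompactSupport.of_support_subset_isCompact isCompact_Icc h

lemma anti_step (f : ℝ → ℝ) (n : ℕ) (hc : Continuous f)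
    (hs : Function.support f ⊆ Set.Icc (1 / 2 : ℝ) 2)
    (hmom : ∀ i : ℕ, i < n + 1 → ∫ x : ℝ, x ^ i * f x = 0) :
    (∀ x, HasDerivAt (fun x => ∫ y in Set.Iic x, f y) (f x) x) ∧
    Function.support (fun x => ∫ y in Set.Iic x, f y) ⊆ Set.Icc (1 / 2 : ℝ) 2 ∧
    (∀ i : ℕ, i < n → ∫ x : ℝ, x ^ i * (∫ y in Set.Iic x, f y) = 0) := by
  have hint : Integrable f := hc.integrable_of_hasCompactSupport (hcs_of_supp hs)
  have hd : ∀ x, HasDerivAt (fun x => ∫ y in Set.Iic x, f y) (f x) x := by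
    intro x
    have h1 : (fun x => ∫ y in Set.Iic x, f y) =
        fun x => (∫ y in Set.Iic (0:ℝ), f y) + ∫ y in (0:ℝ)..x, f y := by
      funext x
      have := intervalIntegral.integral_Iic_sub_Iic (hint.integrableOn (s := Set.Iic 0))
        (hint.integrableOn (s := Set.Iic x))
      linarith
    rw [h1]
    exact (intervalIntegral.integral_hasDerivAt_right (hc.intervalIntegrable _ _)
      hc.stronglyMeasurable.stronglyMeasurableAtFilter hc.continuousAt).const_add _
  have hz : ∀ y, y ∉ Set.Icc (1 / 2 : ℝ) 2 → f y = 0 := fun y hy => by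
    by_contra h; exact hy (hs h)
  have hsupp : Function.support (fun x => ∫ y in Set.Iic x, f y) ⊆ Set.Icc (1 / 2 : ℝ) 2 := by
    intro x hx
    by_contra hx'
    apply hx
    simp only [Set.mem_Icc, not_and_or, not_le] at hx'
    rcases hx' with h | h
    · apply setIntegral_eq_zero_of_forall_eq_zero
      intro y hy
      apply hz
      simp only [Set.mem_Iic] at hy
      intro h2; linarith [h2.1]
    · have : ∫ y in Set.Iic x, f y = ∫ y, f y := by
        apply setIntegral_eq_integral_of_forall_compl_eq_zero
        intro y hy
        apply hz
        simp only [Set.mem_Iic, not_le] at hy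
        intro h2; linarith [h2.2]
      simp only [this]
      simpa using hmom 0 (by omega)
  refine ⟨hd, hsupp, ?_⟩
  intro i hi
  have hGc : Continuous (fun x => ∫ y in Set.Iic x, f y) :=
    continuous_iff_continuousAt.2 fun x => (hd x).continuousAt
  have hcf := hcs_of_supp hs
  have hcG := hcs_of_supp hsupp
  have := integral_mul_deriv_eq_deriv_mul_of_integrable
    (u := fun x : ℝ => x ^ (i+1)) (u' := fun x : ℝ => ((i+1 : ℕ) : ℝ) * x ^ i)
    (v := fun x => ∫ y in Set.Iic x, f y) (v' := f)
    (fun x _ => by simpa using hasDerivAt_pow (i+1) x) (fun x _ => hd x)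
    (Continuous.integrable_of_hasCompactSupport (by fun_prop) hcf.mul_left)
    (Continuous.integrable_of_hasCompactSupport (Continuous.mul (by fun_prop) hGc) hcG.mul_left)
    (Continuous.integrable_of_hasCompactSupport (Continuous.mul (by fun_prop) hGc) hcG.mul_left)
  rw [hmom (i+1) (by omega)] at this
  simp only [mul_assoc] at this
  rw [integral_const_mul] at this
  have h0 : ((i+1 : ℕ) : ℝ) ≠ 0 := by positivity
  rcases mul_eq_zero.1 (neg_eq_zero.1 this.symm) with h | h
  · exact absurd h h0
  · exact h

lemma anti_all (k : ℕ) (m₁ : ℝ → ℝ)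
    (hm₁c : Continuous m₁)
    (hm₁supp : Function.support m₁ ⊆ Set.Icc (1 / 2 : ℝ) 2)
    (hmom : ∀ i : ℕ, i < k → ∫ x : ℝ, x ^ i * m₁ x = 0) (j : ℕ) (hj : j ≤ k) :
    Continuous (iterAnti m₁ j) ∧ Function.support (iterAnti m₁ j) ⊆ Set.Icc (1 / 2 : ℝ) 2 ∧
    (∀ i : ℕ, i < k - j → ∫ x : ℝ, x ^ i * iterAnti m₁ j x = 0) ∧
    (j < k → ∀ x, HasDerivAt (iterAnti m₁ (j+1)) (iterAnti m₁ j x) x) := by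
  induction j with
  | zero =>
    refine ⟨hm₁c, hm₁supp, hmom, fun h => ?_⟩
    exact (anti_step m₁ (k-1) hm₁c hm₁supp (fun i hi => hmom i (by omega))).1
  | succ j ih =>
    obtain ⟨a, b, c, d⟩ := ih (by omega)
    have H := anti_step (iterAnti m₁ j) (k-(j+1)) a b (fun i hi => c i (by omega))
    have hc : Continuous (iterAnti m₁ (j+1)) :=
      continuous_iff_continuousAt.2 fun x => (H.1 x).continuousAt
    refine ⟨hc, H.2.1, H.2.2, fun h => ?_⟩
    exact (anti_step (iterAnti m₁ (j+1)) (k-(j+1)-1) hc H.2.1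
      (fun i hi => H.2.2 i (by omega))).1

lemma parts_all (k : ℕ) (m₁ m₂ : ℝ → ℝ)
    (hm₁c : Continuous m₁)
    (hm₁supp : Function.support m₁ ⊆ Set.Icc (1 / 2 : ℝ) 2)
    (hmom : ∀ i : ℕ, i < k → ∫ x : ℝ, x ^ i * m₁ x = 0)
    (hm₂ : ContDiff ℝ (k : ℕ∞) m₂) (s t x : ℝ) (j : ℕ) (hj : j ≤ k) :
    ∫ z, m₂ ((x - s * z) / t) * m₁ z =
      (s / t) ^ j * ∫ z, iteratedDeriv j m₂ ((x - s * z) / t) * iterAnti m₁ j z := by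
  induction j with
  | zero => simp [iterAnti]
  | succ j ih =>
    rw [ih (by omega)]
    obtain ⟨a, b, -, d⟩ := anti_all k m₁ hm₁c hm₁supp hmom j (by omega)
    obtain ⟨a', b', -, -⟩ := anti_all k m₁ hm₁c hm₁supp hmom (j+1) hj
    have c1 : Continuous (iteratedDeriv j m₂) :=
      hm₂.continuous_iteratedDeriv j (by exact_mod_cast (by omega : j ≤ k))
    have c2 : Continuous (iteratedDeriv (j+1) m₂) :=
      hm₂.continuous_iteratedDeriv (j+1) (by exact_mod_cast hj)
    have dd : Differentiable ℝ (iteratedDeriv j m₂) :=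
      hm₂.differentiable_iteratedDeriv j (by exact_mod_cast (by omega : j < k))
    have := integral_mul_deriv_eq_deriv_mul_of_integrable
      (u := fun z : ℝ => iteratedDeriv j m₂ ((x - s * z) / t))
      (u' := fun z : ℝ => iteratedDeriv (j+1) m₂ ((x - s * z) / t) * (-(s / t)))
      (v := iterAnti m₁ (j+1)) (v' := iterAnti m₁ j)
      (fun z _ => by
        have h1 : HasDerivAt (fun z : ℝ => (x - s * z) / t) (-(s / t)) z := by
          have := (((hasDerivAt_id z).const_mul s).const_sub x).div_const t
          simpa [neg_div] using this
        have h2 := (dd ((x - s * z) / t)).hasDerivAt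
        rw [← iteratedDeriv_succ] at h2
        exact h2.comp z h1) (fun z _ => d (by omega) z)
      (Continuous.integrable_of_hasCompactSupport (by fun_prop) (hcs_of_supp b).mul_left)
      (Continuous.integrable_of_hasCompactSupport (by fun_prop) (hcs_of_supp b').mul_left)
      (Continuous.integrable_of_hasCompactSupport (by fun_prop) (hcs_of_supp b').mul_left)
    rw [this, pow_succ, mul_assoc, ← integral_const_mul (s / t), ← integral_neg]
    congr 2
    funext z
    ring

/-- Moment cancellation and convolution at two scales: if `m₁` is continuous, supported
in `[1/2,2]`, with vanishing moments up to order `k−1`, and `m₂` is `C^k` with support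
in `[1/2,2]`, then (i) the `k`-th iterated antiderivative `F_k` of `m₁` is supported in
`[1/2,2]`, and (ii) for `0 < s ≤ t` the convolution `m₁_s ∗ m₂_t` of the rescalings
`m_u(x) = u⁻¹ m(x/u)` is supported in `[(s+t)/2, 2(s+t)]` and bounded by
`(s/t)^k t⁻¹ ‖F_k‖_{L¹} ‖m₂^{(k)}‖_∞`. -/
theorem moment_cancellation_convolution (k : ℕ) (hk : 1 ≤ k)
    (m₁ m₂ : ℝ → ℝ)
    (hm₁c : Continuous m₁)
    (hm₁supp : Function.support m₁ ⊆ Set.Icc (1 / 2 : ℝ) 2)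
    (hmom : ∀ i : ℕ, i < k → ∫ x : ℝ, x ^ i * m₁ x = 0)
    (hm₂ : ContDiff ℝ (k : ℕ∞) m₂)
    (hm₂supp : Function.support m₂ ⊆ Set.Icc (1 / 2 : ℝ) 2) :
    Function.support (iterAnti m₁ k) ⊆ Set.Icc (1 / 2 : ℝ) 2 ∧
    ∀ s t : ℝ, 0 < s → s ≤ t →
      (∀ x : ℝ, (∫ y : ℝ, s⁻¹ * m₁ ((x - y) / s) * (t⁻¹ * m₂ (y / t))) ≠ 0 →
        x ∈ Set.Icc ((s + t) / 2) (2 * (s + t))) ∧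
      (∀ x : ℝ, |∫ y : ℝ, s⁻¹ * m₁ ((x - y) / s) * (t⁻¹ * m₂ (y / t))|
        ≤ (s / t) ^ k * t⁻¹ * (∫ y : ℝ, |iterAnti m₁ k y|) *
          ⨆ y : ℝ, |iteratedDeriv k m₂ y|) := by
  refine ⟨(anti_all k m₁ hm₁c hm₁supp hmom k le_rfl).2.1, ?_⟩
  intro s t hs hst
  have ht : 0 < t := lt_of_lt_of_le hs hst
  constructor
  · intro x hx
    by_contra hx'
    apply hx
    rw [← integral_zero ℝ ℝ]
    congr 1
    funext y
    by_contra hne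
    apply hx'
    have h1 : m₁ ((x - y) / s) ≠ 0 := by
      intro h; apply hne; simp [h]
    have h2 : m₂ (y / t) ≠ 0 := by
      intro h; apply hne; simp [h]
    obtain ⟨p1, p2⟩ := hm₁supp h1
    obtain ⟨q1, q2⟩ := hm₂supp h2
    rw [le_div_iff₀ hs] at p1
    rw [div_le_iff₀ hs] at p2
    rw [le_div_iff₀ ht] at q1
    rw [div_le_iff₀ ht] at q2
    constructor <;> linarith
  · intro x
    have hcv : (∫ y : ℝ, s⁻¹ * m₁ ((x - y) / s) * (t⁻¹ * m₂ (y / t)))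
        = t⁻¹ * ∫ z, m₂ ((x - s * z) / t) * m₁ z := by
      rw [← integral_sub_left_eq_self _ volume x]
      have := Measure.integral_comp_div (fun z => m₂ ((x - s * z) / t) * m₁ z) s
      rw [smul_eq_mul, abs_of_pos hs] at this
      rw [← inv_mul_cancel_left₀ hs.ne' (∫ z, m₂ ((x - s * z) / t) * m₁ z), ← this,
        ← integral_const_mul, ← integral_const_mul]
      congr 1
      funext y
      rw [mul_div_cancel₀ y hs.ne']
      simp only [sub_sub_cancel]
      ring
    obtain ⟨a, b, -, -⟩ := anti_all k m₁ hm₁c hm₁supp hmom k le_rfl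
    rw [hcv, parts_all k m₁ m₂ hm₁c hm₁supp hmom hm₂ s t x k le_rfl]
    have c2 : Continuous (iteratedDeriv k m₂) :=
      hm₂.continuous_iteratedDeriv k (by exact_mod_cast le_rfl)
    have hcs : HasCompactSupport (iteratedDeriv k m₂) := by
      have hh := hcs_of_supp hm₂supp
      clear * - hh
      induction k with
      | zero => simpa using hh
      | succ n ih => rw [iteratedDeriv_succ]; exact ih.deriv
    have hbdd : BddAbove (Set.range fun y => |iteratedDeriv k m₂ y|) :=
      Continuous.bddAbove_range_of_hasCompactSupport c2.abs hcs.abs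
    have key : |∫ z, iteratedDeriv k m₂ ((x - s * z) / t) * iterAnti m₁ k z| ≤
        (∫ y : ℝ, |iterAnti m₁ k y|) * ⨆ y : ℝ, |iteratedDeriv k m₂ y| := by
      refine (abs_integral_le_integral_abs).trans ?_
      rw [← integral_mul_const]
      apply integral_mono
      · exact (Continuous.integrable_of_hasCompactSupport (by fun_prop)
          (hcs_of_supp b).mul_left).abs
      · exact ((a.integrable_of_hasCompactSupport (hcs_of_supp b)).abs).mul_const _
      · intro z
        simp only [abs_mul]
        rw [mul_comm]
        exact mul_le_mul_of_nonneg_left (le_ciSup hbdd ((x - s * z) / t)) (abs_nonneg _)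
    rw [abs_mul, abs_mul, abs_of_pos (inv_pos.2 ht), abs_of_pos (pow_pos (div_pos hs ht) k)]
    calc _ = (s / t) ^ k * t⁻¹ * |∫ z, iteratedDeriv k m₂ ((x - s * z) / t) * iterAnti m₁ k z| := by ring
      _ ≤ (s / t) ^ k * t⁻¹ * ((∫ y : ℝ, |iterAnti m₁ k y|) * ⨆ y : ℝ, |iteratedDeriv k m₂ y|) :=
        mul_le_mul_of_nonneg_left key (by positivity)
      _ = _ := by ring
end

section
/- For every real d with 0 < d < 4 and every real a ≥ 1, there exists a constant C, depending only on a and d, such that for all r ∈ (0,1]: ∫_0^1 ∫_0^1 (r/(r+t₁))^a (r/(r+t₂))^a (t₁+t₂)^{−d/2} (r+t₁+t₂)^{−d/2} dt₁ dt₂ ≤ C r^{2−d}. -/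
open MeasureTheory Set

lemma aux_h_int (b : ℝ) (hb0 : 0 < b) (hb1 : b < 1) :
    IntegrableOn (fun s : ℝ => (1 + s) ^ (-1 - b) * s ^ (-b)) (Ioi 0) := by
  have hm : Measurable (fun s : ℝ => (1 + s) ^ (-1 - b) * s ^ (-b)) := by fun_prop
  rw [← Ioc_union_Ioi_eq_Ioi (zero_le_one' ℝ)]
  refine IntegrableOn.union ?_ ?_
  · have h1 : IntegrableOn (fun s : ℝ => s ^ (-b)) (Ioc 0 1) := by
      have := intervalIntegral.intervalIntegrable_rpow' (a := 0) (b := 1) (r := -b) (by linarith)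
      rwa [intervalIntegrable_iff_integrableOn_Ioc_of_le zero_le_one] at this
    refine Integrable.mono' h1 hm.aestronglyMeasurable ?_
    filter_upwards [ae_restrict_mem measurableSet_Ioc] with s hs
    have hs0 : 0 < s := hs.1
    rw [Real.norm_of_nonneg (by positivity)]
    have : (1 + s) ^ (-1 - b) ≤ 1 :=
      Real.rpow_le_one_of_one_le_of_nonpos (by linarith) (by linarith)
    exact mul_le_of_le_one_left (by positivity) this
  · have h1 : IntegrableOn (fun s : ℝ => s ^ (-1 - b)) (Ioi 1) :=
      integrableOn_Ioi_rpow_of_lt (by linarith) one_pos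
    refine Integrable.mono' h1 hm.aestronglyMeasurable ?_
    filter_upwards [ae_restrict_mem measurableSet_Ioi] with s hs
    have hs1 : 1 < s := hs
    have hs0 : 0 < s := by linarith
    rw [Real.norm_of_nonneg (by positivity)]
    have h2 : s ^ (-b) ≤ 1 :=
      Real.rpow_le_one_of_one_le_of_nonpos (by linarith) (by linarith)
    have h3 : (1 + s) ^ (-1 - b) ≤ s ^ (-1 - b) :=
      Real.rpow_le_rpow_of_nonpos hs0 (by linarith) (by linarith)
    calc _ ≤ (1 + s) ^ (-1 - b) * 1 := by gcongr
      _ ≤ _ := by linarith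

lemma aux_sum (b x y : ℝ) (hb : 0 < b) (hx : 0 < x) (hy : 0 < y) (z : ℝ)
    (hxz : x ≤ z) (hyz : y ≤ z) :
    z ^ (-(2 * b)) ≤ x ^ (-b) * y ^ (-b) := by
  have hz : 0 < z := by linarith
  have : -(2 * b) = -b + -b := by ring
  rw [this, Real.rpow_add hz]
  have h1 := Real.rpow_le_rpow_of_nonpos hx hxz (by linarith : -b ≤ 0)
  have h2 := Real.rpow_le_rpow_of_nonpos hy hyz (by linarith : -b ≤ 0)
  gcongr

lemma aux_g (b r t : ℝ) (hr : 0 < r) (ht : 0 < t) :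
    r / (r + t) * t ^ (-b) * (r + t) ^ (-b) =
      r ^ (-(2 * b)) * ((1 + r⁻¹ * t) ^ (-1 - b) * (r⁻¹ * t) ^ (-b)) := by
  have e : 1 + r⁻¹ * t = r⁻¹ * (r + t) := by field_simp
  have h0 : -1 - b = -1 + -b := by ring
  have h1 : -(2 * b) = -b + -b := by ring
  rw [e, Real.mul_rpow (by positivity) (by positivity),
    Real.mul_rpow (by positivity) (by positivity), h0, h1, Real.rpow_add hr,
    Real.rpow_add (by positivity), Real.rpow_add (by positivity),
    Real.rpow_neg_one, Real.rpow_neg_one, Real.inv_rpow hr.le, inv_inv]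
  have : r ^ (-b) ≠ 0 := by positivity
  field_simp

lemma aux_pt (d a r x y : ℝ) (hd0 : 0 < d) (ha : 1 ≤ a) (hr : 0 < r) (hx : 0 < x) (hy : 0 < y) :
    (r / (r + x)) ^ a * (r / (r + y)) ^ a * (x + y) ^ (-(d / 2)) * (r + x + y) ^ (-(d / 2)) ≤
      (r / (r + x) * x ^ (-(d / 4)) * (r + x) ^ (-(d / 4))) *
      (r / (r + y) * y ^ (-(d / 4)) * (r + y) ^ (-(d / 4))) := by
  have key : ∀ t : ℝ, 0 < t → (r / (r + t)) ^ a ≤ r / (r + t) := fun t ht => by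
    have := Real.rpow_le_rpow_of_exponent_ge (x := r / (r + t)) (by positivity)
      ((div_le_one (by positivity)).2 (by linarith)) ha
    rwa [Real.rpow_one] at this
  have e : -(d / 2) = -(2 * (d / 4)) := by ring
  have h1 := aux_sum (d / 4) x y (by positivity) hx hy (x + y) (by linarith) (by linarith)
  have h2 := aux_sum (d / 4) (r + x) (r + y) (by positivity) (by linarith) (by linarith)
    (r + x + y) (by linarith) (by linarith)
  have h3 := key x hx
  have h4 := key y hy
  rw [e]
  calc _ ≤ (r / (r + x)) * (r / (r + y)) * (x ^ (-(d / 4)) * y ^ (-(d / 4))) *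
        ((r + x) ^ (-(d / 4)) * (r + y) ^ (-(d / 4))) := by gcongr
    _ = _ := by ring


/-- The integral estimate from the renormalisation of the quadratic terms of the
parabolic Anderson model: for `0 < d < 4` and `a ≥ 1` there is a constant `C`,
depending only on `a` and `d`, such that for all `r ∈ (0,1]`:
`∫₀¹∫₀¹ (r/(r+t₁))^a (r/(r+t₂))^a (t₁+t₂)^{−d/2} (r+t₁+t₂)^{−d/2} dt₁ dt₂ ≤ C r^{2−d}`. -/
theorem quadratic_renormalisation_integral (d a : ℝ)
    (hd0 : 0 < d) (hd4 : d < 4) (ha : 1 ≤ a) :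
    ∃ C : ℝ, 0 < C ∧ ∀ r ∈ Set.Ioc (0 : ℝ) 1,
      (∫ t₁ in Set.Ioc (0 : ℝ) 1, ∫ t₂ in Set.Ioc (0 : ℝ) 1,
          (r / (r + t₁)) ^ a * (r / (r + t₂)) ^ a * (t₁ + t₂) ^ (-(d / 2)) *
            (r + t₁ + t₂) ^ (-(d / 2)))
        ≤ C * r ^ (2 - d) := by
  have hb0 : 0 < d / 4 := by positivity
  have hh := aux_h_int (d / 4) hb0 (by linarith)
  set h : ℝ → ℝ := fun s : ℝ => (1 + s) ^ (-1 - d / 4) * s ^ (-(d / 4)) with hdef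
  set K := ∫ s in Ioi (0 : ℝ), h s with hK
  refine ⟨K ^ 2 + 1, by positivity, ?_⟩
  rintro r ⟨hr, -⟩
  set g : ℝ → ℝ := fun t => r ^ (-(2 * (d / 4))) * h (r⁻¹ * t) with gdef
  have hgi : IntegrableOn g (Ioi 0) := by
    have := (integrableOn_Ioi_comp_mul_left_iff h 0 (inv_pos.2 hr)).2 (by simpa using hh)
    exact this.const_mul _
  have hgI : ∫ t in Ioi (0 : ℝ), g t = r ^ (1 - d / 2) * K := by
    rw [gdef, integral_const_mul, integral_comp_mul_left_Ioi h 0 (inv_pos.2 hr)]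
    have : 1 - d / 2 = -(2 * (d / 4)) + 1 := by ring
    rw [this, Real.rpow_add hr, Real.rpow_one]
    simp [hK]
    ring
  have hg0 : ∀ t, 0 < t → 0 ≤ g t := fun t ht => by
    have : 0 < r⁻¹ * t := by positivity
    simp only [gdef, hdef]
    positivity
  have hgi1 : IntegrableOn g (Ioc 0 1) := hgi.mono_set Ioc_subset_Ioi_self
  set G := ∫ t in Ioc (0 : ℝ) 1, g t with hG
  have hG0 : 0 ≤ G := setIntegral_nonneg measurableSet_Ioc fun t ht => hg0 t ht.1
  have hGle : G ≤ r ^ (1 - d / 2) * K := by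
    rw [← hgI]
    refine setIntegral_mono_set hgi ?_ Ioc_subset_Ioi_self.eventuallyLE
    filter_upwards [ae_restrict_mem measurableSet_Ioi] with t ht using hg0 t ht
  have hpt : ∀ x y : ℝ, 0 < x → 0 < y →
      (r / (r + x)) ^ a * (r / (r + y)) ^ a * (x + y) ^ (-(d / 2)) * (r + x + y) ^ (-(d / 2)) ≤
      g x * g y := fun x y hx hy => by
    have := aux_pt d a r x y hd0 ha hr hx hy
    rwa [aux_g _ r x hr hx, aux_g _ r y hr hy] at this
  have hin : ∀ x : ℝ, 0 < x → (∫ y in Ioc (0 : ℝ) 1,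
      (r / (r + x)) ^ a * (r / (r + y)) ^ a * (x + y) ^ (-(d / 2)) *
        (r + x + y) ^ (-(d / 2))) ≤ g x * G := fun x hx => by
    rw [hG, ← integral_const_mul]
    refine integral_mono_of_nonneg ?_ (hgi1.const_mul _) ?_
    · filter_upwards [ae_restrict_mem measurableSet_Ioc] with y hy
      have := hy.1
      simp only [Pi.zero_apply]
      positivity
    · filter_upwards [ae_restrict_mem measurableSet_Ioc] with y hy using hpt x y hx hy.1
  calc _ ≤ ∫ x in Ioc (0 : ℝ) 1, g x * G := by
        refine integral_mono_of_nonneg ?_ (hgi1.mul_const _) ?_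
        · filter_upwards [ae_restrict_mem measurableSet_Ioc] with x hx
          refine setIntegral_nonneg measurableSet_Ioc fun y hy => ?_
          have := hy.1
          have := hx.1
          positivity
        · filter_upwards [ae_restrict_mem measurableSet_Ioc] with x hx using hin x hx.1
    _ = G * G := by rw [integral_mul_const]
    _ ≤ (r ^ (1 - d / 2) * K) * (r ^ (1 - d / 2) * K) := mul_self_le_mul_self hG0 hGle
    _ = K ^ 2 * r ^ (2 - d) := by
        have : 2 - d = (1 - d / 2) + (1 - d / 2) := by ring
        rw [this, Real.rpow_add hr]; ring
    _ ≤ _ := by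
        have : 0 < r ^ (2 - d) := by positivity
        nlinarith
end

section
/- For every real d with 0 < d < 4 and every real a ≥ 3, there exists a constant C, depending only on a and d, such that for all r ∈ (0,1]: ∫_0^1 ∫_0^1 (r/(r+t₁))^a (r/(r+t₂))^a (t₁ t₂)^{−d/2} (r+t₁+t₂)^{−d/2} t₁ t₂ dt₁ dt₂ ≤ C r^{4−3d/2}. -/
open MeasureTheory Set in
lemma tri_h_int (d a : ℝ) (hd0 : 0 < d) (hd4 : d < 4) (ha : 3 ≤ a) :
    IntegrableOn (fun s : ℝ => (1 / (1 + s)) ^ a * s ^ (1 - d / 2)) (Ioi 0) := by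
  have hm : Measurable (fun s : ℝ => (1 / (1 + s)) ^ a * s ^ (1 - d / 2)) := by
    fun_prop
  rw [← Ioc_union_Ioi_eq_Ioi (zero_le_one (α := ℝ))]
  refine IntegrableOn.union ?_ ?_
  · have h1 : IntegrableOn (fun s : ℝ => s ^ (1 - d / 2)) (Ioc 0 1) := by
      rw [← intervalIntegrable_iff_integrableOn_Ioc_of_le zero_le_one]
      exact intervalIntegral.intervalIntegrable_rpow' (by linarith)
    refine Integrable.mono' h1 hm.aestronglyMeasurable ?_
    filter_upwards [ae_restrict_mem measurableSet_Ioc] with s hs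
    have hs0 := hs.1
    rw [Real.norm_of_nonneg (by positivity)]
    have : (1 / (1 + s)) ^ a ≤ 1 := by
      apply Real.rpow_le_one (by positivity)
      · rw [div_le_one (by positivity)]; linarith
      · linarith
    exact mul_le_of_le_one_left (by positivity) this
  · have h1 : IntegrableOn (fun s : ℝ => s ^ (-2 - d / 2)) (Ioi 1) :=
      integrableOn_Ioi_rpow_of_lt (by linarith) zero_lt_one
    refine Integrable.mono' h1 hm.aestronglyMeasurable ?_
    filter_upwards [ae_restrict_mem measurableSet_Ioi] with s hs
    have hs1 : 1 < s := hs
    have hs0 : 0 < s := by linarith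
    rw [Real.norm_of_nonneg (by positivity)]
    have : (1 / (1 + s)) ^ a ≤ s ^ (-3 : ℝ) := by
      calc (1 / (1 + s)) ^ a ≤ (1 / (1 + s)) ^ (3 : ℝ) := by
            apply Real.rpow_le_rpow_of_exponent_ge (by positivity) _ ha
            rw [div_le_one (by positivity)]; linarith
        _ ≤ (s⁻¹) ^ (3 : ℝ) := by
            apply Real.rpow_le_rpow (by positivity) _ (by norm_num)
            rw [one_div]
            gcongr
            linarith
        _ = s ^ (-3 : ℝ) := by
            rw [Real.inv_rpow hs0.le, Real.rpow_neg hs0.le]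
    calc _ ≤ s ^ (-3 : ℝ) * s ^ (1 - d / 2) := by gcongr
      _ = _ := by rw [← Real.rpow_add hs0]; ring_nf

open MeasureTheory Set in
lemma tri_f (d a : ℝ) (hd0 : 0 < d) (hd4 : d < 4) (ha : 3 ≤ a) (r : ℝ) (hr : 0 < r) :
    IntegrableOn (fun t : ℝ => (r / (r + t)) ^ a * t ^ (1 - d / 2)) (Ioc 0 1) ∧
    (∫ t in Ioc (0:ℝ) 1, (r / (r + t)) ^ a * t ^ (1 - d / 2)) ≤
      (∫ s in Ioi (0:ℝ), (1 / (1 + s)) ^ a * s ^ (1 - d / 2)) * r ^ (2 - d / 2) := by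
  have hh := tri_h_int d a hd0 hd4 ha
  set h := (fun s : ℝ => (1 / (1 + s)) ^ a * s ^ (1 - d / 2)) with hdef
  have hri : 0 < r⁻¹ := by positivity
  have h2 : IntegrableOn (fun t => h (r⁻¹ * t)) (Ioi 0) := by
    rw [integrableOn_Ioi_comp_mul_left_iff h 0 hri]; simpa using hh
  have h3 : IntegrableOn (fun t => r ^ (1 - d / 2) * h (r⁻¹ * t)) (Ioi 0) :=
    Integrable.const_mul h2 _
  have heq : EqOn (fun t => r ^ (1 - d / 2) * h (r⁻¹ * t))
      (fun t : ℝ => (r / (r + t)) ^ a * t ^ (1 - d / 2)) (Ioi 0) := by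
    intro t ht
    have ht0 : 0 < t := ht
    simp only [hdef]
    rw [Real.mul_rpow hri.le ht0.le, Real.inv_rpow hr.le]
    have e : 1 / (1 + r⁻¹ * t) = r / (r + t) := by field_simp
    have : r ^ (1 - d / 2) ≠ 0 := by positivity
    rw [e]; field_simp
  have h4 := h3.congr_fun heq measurableSet_Ioi
  refine ⟨h4.mono_set Ioc_subset_Ioi_self, ?_⟩
  calc _ ≤ ∫ t in Ioi (0:ℝ), (r / (r + t)) ^ a * t ^ (1 - d / 2) := by
        apply setIntegral_mono_set h4
        · filter_upwards [ae_restrict_mem measurableSet_Ioi] with t ht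
          have ht0 : 0 < t := ht
          simp only [Pi.zero_apply]
          positivity
        · exact Ioc_subset_Ioi_self.eventuallyLE
    _ = ∫ t in Ioi (0:ℝ), r ^ (1 - d / 2) * h (r⁻¹ * t) :=
        (setIntegral_congr_fun measurableSet_Ioi heq).symm
    _ = _ := by
        rw [integral_const_mul, integral_comp_mul_left_Ioi h 0 hri]
        have : r ^ (2 - d / 2) = r ^ (1 - d / 2) * r := by
          rw [← Real.rpow_add_one hr.ne']; ring_nf
        rw [this]; simp; ring

/-- The integral estimate from the renormalisation of the trilinear terms of the
parabolic Anderson model: for `0 < d < 4` and `a ≥ 3` there is a constant `C`,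
depending only on `a` and `d`, such that for all `r ∈ (0,1]`:
`∫₀¹∫₀¹ (r/(r+t₁))^a (r/(r+t₂))^a (t₁t₂)^{−d/2} (r+t₁+t₂)^{−d/2} t₁ t₂ dt₁ dt₂
  ≤ C r^{4−3d/2}`. -/
theorem trilinear_renormalisation_integral (d a : ℝ)
    (hd0 : 0 < d) (hd4 : d < 4) (ha : 3 ≤ a) :
    ∃ C : ℝ, 0 < C ∧ ∀ r ∈ Set.Ioc (0 : ℝ) 1,
      (∫ t₁ in Set.Ioc (0 : ℝ) 1, ∫ t₂ in Set.Ioc (0 : ℝ) 1,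
          (r / (r + t₁)) ^ a * (r / (r + t₂)) ^ a * (t₁ * t₂) ^ (-(d / 2)) *
            (r + t₁ + t₂) ^ (-(d / 2)) * (t₁ * t₂))
        ≤ C * r ^ (4 - 3 * d / 2) := by
  set K := ∫ s in Set.Ioi (0:ℝ), (1 / (1 + s)) ^ a * s ^ (1 - d / 2) with hK
  refine ⟨K ^ 2 + 1, by positivity, ?_⟩
  rintro r ⟨hr, -⟩
  obtain ⟨hfi, hfb⟩ := tri_f d a hd0 hd4 ha r hr
  rw [← hK] at hfb
  set I := ∫ t in Set.Ioc (0:ℝ) 1, (r / (r + t)) ^ a * t ^ (1 - d / 2) with hI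
  have hI0 : 0 ≤ I := by
    apply MeasureTheory.setIntegral_nonneg measurableSet_Ioc
    intro t ht
    have := ht.1
    positivity
  have pt : ∀ t₁ ∈ Set.Ioc (0:ℝ) 1, ∀ t₂ ∈ Set.Ioc (0:ℝ) 1,
      (r / (r + t₁)) ^ a * (r / (r + t₂)) ^ a * (t₁ * t₂) ^ (-(d / 2)) *
            (r + t₁ + t₂) ^ (-(d / 2)) * (t₁ * t₂) ≤
      (r ^ (-(d / 2)) * ((r / (r + t₁)) ^ a * t₁ ^ (1 - d / 2))) *
        ((r / (r + t₂)) ^ a * t₂ ^ (1 - d / 2)) := by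
    intro t₁ h1 t₂ h2
    have p1 := h1.1
    have p2 := h2.1
    have e : ∀ t : ℝ, 0 < t → t ^ (1 - d / 2) = t ^ (-(d / 2)) * t := by
      intro t ht
      rw [← Real.rpow_add_one ht.ne']; ring_nf
    have hb : (r + t₁ + t₂) ^ (-(d / 2)) ≤ r ^ (-(d / 2)) :=
      Real.rpow_le_rpow_of_nonpos hr (by linarith) (by linarith)
    calc _ ≤ (r / (r + t₁)) ^ a * (r / (r + t₂)) ^ a * (t₁ * t₂) ^ (-(d / 2)) *
            r ^ (-(d / 2)) * (t₁ * t₂) := by gcongr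
      _ = _ := by
        rw [e _ p1, e _ p2, Real.mul_rpow p1.le p2.le]; ring
  have inner : ∀ t₁ ∈ Set.Ioc (0:ℝ) 1, (∫ t₂ in Set.Ioc (0 : ℝ) 1,
          (r / (r + t₁)) ^ a * (r / (r + t₂)) ^ a * (t₁ * t₂) ^ (-(d / 2)) *
            (r + t₁ + t₂) ^ (-(d / 2)) * (t₁ * t₂)) ≤
      (r ^ (-(d / 2)) * I) * ((r / (r + t₁)) ^ a * t₁ ^ (1 - d / 2)) := by
    intro t₁ h1
    have p1 := h1.1
    refine (MeasureTheory.integral_mono_of_nonneg ?_ (MeasureTheory.Integrable.const_mul hfi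
      (r ^ (-(d / 2)) * ((r / (r + t₁)) ^ a * t₁ ^ (1 - d / 2)))) ?_).trans ?_
    · filter_upwards [MeasureTheory.ae_restrict_mem measurableSet_Ioc] with t ht
      have := ht.1
      simp only [Pi.zero_apply]
      positivity
    · filter_upwards [MeasureTheory.ae_restrict_mem measurableSet_Ioc] with t ht
      exact pt t₁ h1 t ht
    · rw [MeasureTheory.integral_const_mul, ← hI]
      apply le_of_eq; ring
  refine (MeasureTheory.integral_mono_of_nonneg ?_ (MeasureTheory.Integrable.const_mul hfi
      (r ^ (-(d / 2)) * I)) ?_).trans ?_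
  · filter_upwards [MeasureTheory.ae_restrict_mem measurableSet_Ioc] with t ht
    have := ht.1
    apply MeasureTheory.setIntegral_nonneg measurableSet_Ioc
    intro s hs
    have := hs.1
    positivity
  · filter_upwards [MeasureTheory.ae_restrict_mem measurableSet_Ioc] with t ht
    exact inner t ht
  · rw [MeasureTheory.integral_const_mul, ← hI]
    have e : r ^ (4 - 3 * d / 2) = r ^ (-(d / 2)) * (r ^ (2 - d / 2) * r ^ (2 - d / 2)) := by
      rw [← Real.rpow_add hr, ← Real.rpow_add hr]; ring_nf
    calc r ^ (-(d / 2)) * I * I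
        ≤ r ^ (-(d / 2)) * (K * r ^ (2 - d / 2)) * (K * r ^ (2 - d / 2)) := by
          have hp : 0 ≤ K * r ^ (2 - d / 2) := hI0.trans hfb
          have hq : 0 ≤ r ^ (-(d / 2)) * (K * r ^ (2 - d / 2)) :=
            mul_nonneg (by positivity) hp
          gcongr
      _ = K ^ 2 * r ^ (4 - 3 * d / 2) := by rw [e]; ring
      _ ≤ _ := by
        gcongr
        linarith
end
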